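/- Let {f_α}_{α∈A} : 𝒮_X → 𝒮_Y be a morphism between two πτ-spectra 𝒮_X = {X_α, p_α^β, A} and 𝒮_Y = {Y_α, π_α^β, A} with surjective limit projections. If every map f_α, α ∈ A, is skeletal, then the limit map lim f_α : lim 𝒮_X → lim 𝒮_Y is skeletal. -/

import Mathlib

open Set Topology

universe u

/-- A continuous map `f : X → Y` is *skeletal* if for every non-empty open `U ⊆ X` the
closure of `f(U)` has non-empty interior. -/
def Skeletal {X Y : Type*} [TopologicalSpace X] [TopologicalSpace Y] (f : X → Y) : Prop :=
  ∀ U : Set X, IsOpen U → U.Nonempty → (interior (closure (f '' U))).Nonempty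

/-- A commutative square (top map `g' : X' → Y'`, bottom map `g : X → Y`, vertical maps
`qX : X' → X`, `qY : Y' → Y`) is *skeletal* if for each point `x ∈ X` and each neighborhood
`U` of `x` there is a non-empty open `V ⊆ Y` with `V ⊆ cl (g '' U)` and
`qY ⁻¹' V ⊆ cl (g' '' (qX ⁻¹' U))`. -/
def SkeletalSquare {X Y X' Y' : Type*} [TopologicalSpace X] [TopologicalSpace Y]
    [TopologicalSpace X'] [TopologicalSpace Y']
    (g' : X' → Y') (g : X → Y) (qX : X' → X) (qY : Y' → Y) : Prop :=
  ∀ x : X, ∀ U ∈ 𝓝 x, ∃ V : Set Y, IsOpen V ∧ V.Nonempty ∧ V ⊆ closure (g '' U) ∧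
    qY ⁻¹' V ⊆ closure (g' '' (qX ⁻¹' U))

/-- An *inverse spectrum* over a partially ordered index set `A`: topological spaces `X a`
together with continuous bonding maps `bond h : X b → X a` for `h : a ≤ b`, satisfying the
usual identity and composition laws. -/
structure InvSpec (A : Type u) [PartialOrder A] : Type (u + 1) where
  X : A → Type u
  [topX : ∀ a, TopologicalSpace (X a)]
  bond : ∀ {a b : A}, a ≤ b → X b → X a
  bond_cont : ∀ {a b : A} (h : a ≤ b), Continuous (bond h)
  bond_refl : ∀ (a : A) (x : X a), bond le_rfl x = x
  bond_comp : ∀ {a b c : A} (hab : a ≤ b) (hbc : b ≤ c) (x : X c),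
    bond hab (bond hbc x) = bond (hab.trans hbc) x

attribute [instance] InvSpec.topX

variable {A : Type u} [PartialOrder A]

/-- The limit `lim 𝒮` of an inverse spectrum, as the set of threads in the product. -/
def InvSpec.limitSet (S : InvSpec A) : Set (∀ a, S.X a) :=
  {x | ∀ (a b : A) (h : a ≤ b), S.bond h (x b) = x a}

/-- The limit projection `p_a : lim 𝒮 → X a`. -/
def InvSpec.proj (S : InvSpec A) (a : A) : S.limitSet → S.X a := fun x => x.1 a

/-- A *morphism* between two inverse spectra over the same index set: a family of continuous
maps `f a : X a → Y a` commuting with the bonding maps. -/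
structure SpecMor (S T : InvSpec A) where
  maps : ∀ a, S.X a → T.X a
  maps_cont : ∀ a, Continuous (maps a)
  comm : ∀ {a b : A} (h : a ≤ b) (x : S.X b), maps a (S.bond h x) = T.bond h (maps b x)

/-- The limit map `lim f_a : lim 𝒮_X → lim 𝒮_Y` of a morphism of spectra. -/
def SpecMor.limMap {S T : InvSpec A} (F : SpecMor S T) : S.limitSet → T.limitSet :=
  fun x => ⟨fun a => F.maps a (x.1 a),
    fun a b h => by rw [← F.comm h (x.1 b), x.2 a b h]⟩

/-- The *limit `↓a`-square* of a morphism (top map `lim f`, bottom map `f a`, verticals the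
limit projections) is skeletal. -/
def LimitSquareSkeletal {S T : InvSpec A} (F : SpecMor S T) (a : A) : Prop :=
  SkeletalSquare F.limMap (F.maps a) (S.proj a) (T.proj a)

/-- The *bonding `↓_a^b`-square* of a morphism (top map `f b`, bottom map `f a`, verticals
the bonding maps) is skeletal. -/
def BondingSquareSkeletal {S T : InvSpec A} (F : SpecMor S T) {a b : A} (h : a ≤ b) : Prop :=
  SkeletalSquare (F.maps b) (F.maps a) (S.bond h) (T.bond h)

/-- A family of non-empty open sets is a *π-base* if every non-empty open set contains a
member of the family. -/
def IsPiBase {Z : Type*} [TopologicalSpace Z] (B : Set (Set Z)) : Prop :=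
  (∀ U ∈ B, IsOpen U ∧ U.Nonempty) ∧
  ∀ U : Set Z, IsOpen U → U.Nonempty → ∃ V ∈ B, V ⊆ U

/-- The *π-weight* of a space: the smallest cardinality of a π-base. -/
noncomputable def piWeight (Z : Type u) [TopologicalSpace Z] : Cardinal.{u} :=
  ⨅ B : {B : Set (Set Z) // IsPiBase B}, Cardinal.mk B.1

/-- A partially ordered set is *κ-directed* if every subset of cardinality `≤ κ` has an
upper bound. -/
def CardDirected (A : Type u) [PartialOrder A] (κ : Cardinal.{u}) : Prop :=
  ∀ K : Set A, Cardinal.mk K ≤ κ → ∃ ub : A, ∀ k ∈ K, k ≤ ub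

/-- A partially ordered set is *ω-complete* if every (non-empty) countable chain has a least
upper bound. -/
def OmegaComplete (A : Type u) [PartialOrder A] : Prop :=
  ∀ C : Set A, C.Countable → C.Nonempty → IsChain (· ≤ ·) C → ∃ b : A, IsLUB C b

/-- The limit of the restriction of a spectrum to a subset `C` of the index set. -/
def InvSpec.limitSetOn (S : InvSpec A) (C : Set A) : Set (∀ c : C, S.X c) :=
  {x | ∀ (c d : C) (h : (c : A) ≤ (d : A)), S.bond h (x d) = x c}

/-- The canonical map `X g → lim {X a, a ∈ C}` when `g` is a least upper bound of `C`. -/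
def InvSpec.toLimitOn (S : InvSpec A) {C : Set A} {g : A} (hg : IsLUB C g) :
    S.X g → S.limitSetOn C :=
  fun xg => ⟨fun c => S.bond (hg.1 c.2) xg, fun c d h => S.bond_comp h (hg.1 d.2) xg⟩

/-- A spectrum is *continuous* (τ-continuous) if for every non-empty directed subset `C` of
the index set having a least upper bound `g`, the canonical map `X g → lim {X a, a ∈ C}` is
a homeomorphism. -/
def InvSpec.IsContinuousSpectrum (S : InvSpec A) : Prop :=
  ∀ (C : Set A) (g : A), C.Nonempty → DirectedOn (· ≤ ·) C → ∀ hg : IsLUB C g,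
    IsHomeomorph (S.toLimitOn hg)

/-- A *πτ-spectrum*: all spaces have π-weight `≤ τ`, the index set is τ-directed and
ω-complete, and the spectrum is τ-continuous. -/
def IsPiTauSpectrum (τ : Cardinal.{u}) (S : InvSpec A) : Prop :=
  (∀ a : A, piWeight (S.X a) ≤ τ) ∧ CardDirected A τ ∧ OmegaComplete A ∧
    S.IsContinuousSpectrum

/-- A subset `C` of a directed poset is *cofinal* if every element of the poset is below
some element of `C`. -/
def IsCofinalSub {A : Type u} [PartialOrder A] (C : Set A) : Prop :=
  ∀ a : A, ∃ b ∈ C, a ≤ b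

/-- A subset `C` is *τ-closed* (equivalently ω-closed) if for each (non-empty) directed
subset `D ⊆ C` having a least upper bound in `A`, this least upper bound belongs to `C`. -/
def IsSupClosed {A : Type u} [PartialOrder A] (C : Set A) : Prop :=
  ∀ D ⊆ C, D.Nonempty → DirectedOn (· ≤ ·) D → ∀ g : A, IsLUB D g → g ∈ C

/-!
The heart of the argument is a reflection principle for nowhere dense sets. Suppose `D` is nowhere
dense in the limit. Each non-empty open subset of `X a` has, at some higher level, a preimage not
contained in the closure of the projection of `D`. Since it suffices to treat the members of a small
π-base and the index set is sufficiently directed, a single level `φ a` serves all non-empty open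
subsets of `X a` at once. At the supremum `g` of `a ≤ φ a ≤ φ (φ a) ≤ ⋯`, continuity of the spectrum
provides a base of preimages of open sets from these levels, so the projection of `D` to `X g` is
nowhere dense.

If the limit map were not skeletal, the image of some non-empty open set would be nowhere dense.
Shrinking that open set to the preimage of an open subset of some `X a` and reflecting its image
at a level above `a` yields a level at which the morphism is not skeletal.
-/

theorem exists_isPiBase_mk_eq_piWeight (Z : Type u) [TopologicalSpace Z] :
    ∃ B : Set (Set Z), IsPiBase B ∧ Cardinal.mk B = piWeight Z := by
  have : Nonempty {B : Set (Set Z) // IsPiBase B} :=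
    ⟨{U | IsOpen U ∧ U.Nonempty}, fun _ hU => hU, fun U hU hne => ⟨U, ⟨hU, hne⟩, subset_rfl⟩⟩
  obtain ⟨B, hB⟩ := ciInf_mem fun B : {B : Set (Set Z) // IsPiBase B} => Cardinal.mk B.1
  exact ⟨B.1, B.2, hB⟩

theorem CardDirected.isDirectedOrder {κ : Cardinal.{u}} (hA : CardDirected A κ)
    (hκ : Cardinal.aleph0 ≤ κ) : IsDirectedOrder A where
  directed a b := by
    obtain ⟨c, hc⟩ := hA {a, b} ((Cardinal.mk_le_aleph0_iff.mpr inferInstance).trans hκ)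
    exact ⟨c, hc a (mem_insert a {b}), hc b (mem_insert_of_mem a rfl)⟩

theorem OmegaComplete.exists_isChain_mapsTo_isLUB (hA : OmegaComplete A) {φ : A → A}
    (hφ : ∀ a, a ≤ φ a) (a : A) :
    ∃ (C : Set A) (g : A), a ∈ C ∧ IsChain (· ≤ ·) C ∧ MapsTo φ C C ∧ IsLUB C g := by
  let orbit : ℕ → A := fun n => φ^[n] a
  have hchain : IsChain (· ≤ ·) (range orbit) :=
    Monotone.isChain_range fun _ _ h => Function.monotone_iterate_of_id_le hφ h a
  have hmaps : MapsTo φ (range orbit) (range orbit) := by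
    rintro _ ⟨n, rfl⟩
    exact ⟨n + 1, Function.iterate_succ_apply' φ n a⟩
  obtain ⟨g, hg⟩ := hA _ (countable_range orbit) (range_nonempty orbit) hchain
  exact ⟨range orbit, g, ⟨0, rfl⟩, hchain, hmaps, hg⟩

namespace InvSpec

open TopologicalSpace

variable (S : InvSpec A)

theorem continuous_proj (a : A) : Continuous (S.proj a) :=
  (continuous_apply a).comp continuous_subtype_val

theorem bond_proj {a b : A} (h : a ≤ b) (x : S.limitSet) :
    S.bond h (S.proj b x) = S.proj a x :=
  x.2 a b h

variable {S} in
theorem denseRange_bond {a b : A} (h : a ≤ b) (ha : DenseRange (S.proj a)) :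
    DenseRange (S.bond h) :=
  ha.mono <| range_subset_iff.mpr fun x => ⟨S.proj b x, S.bond_proj h x⟩

theorem isTopologicalBasis_limitSet [Nonempty A] [IsDirectedOrder A] :
    IsTopologicalBasis {G : Set S.limitSet | ∃ a O, IsOpen O ∧ S.proj a ⁻¹' O = G} := by
  refine isTopologicalBasis_of_isOpen_of_nhds ?_ fun x G hx hG => ?_
  · rintro _ ⟨a, O, hO, rfl⟩
    exact hO.preimage (S.continuous_proj a)
  · obtain ⟨G', hG', rfl⟩ := isOpen_induced_iff.mp hG
    obtain ⟨I, O, hO, hsub⟩ := isOpen_pi_iff.mp hG' x.1 hx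
    obtain ⟨b, hb⟩ := I.exists_le
    have preimage_bond (i : I) : S.proj b ⁻¹' (S.bond (hb i i.2) ⁻¹' O i) = S.proj i ⁻¹' O i :=
      ext fun y => by simp only [mem_preimage, bond_proj]
    refine ⟨_, ⟨b, ⋂ i : I, S.bond (hb i i.2) ⁻¹' O i,
      isOpen_iInter_of_finite fun i => (hO i i.2).1.preimage (S.bond_cont _), rfl⟩, ?_, ?_⟩ <;>
      simp only [preimage_iInter, preimage_bond]
    · exact mem_iInter.mpr fun i => (hO i i.2).2
    · exact fun y hy => hsub fun i hi => mem_iInter.mp hy ⟨i, hi⟩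

/-- The restriction of an inverse spectrum to a subset `C` of its index set; its `limitSet` is
`S.limitSetOn C` definitionally. -/
abbrev restrict (C : Set A) : InvSpec C where
  X c := S.X c
  bond h := S.bond h
  bond_cont h := S.bond_cont h
  bond_refl c := S.bond_refl c
  bond_comp hab hbc := S.bond_comp hab hbc

variable {S}

theorem IsContinuousSpectrum.isTopologicalBasis_of_isLUB (hS : S.IsContinuousSpectrum) {C : Set A}
    {g : A} (hC : C.Nonempty) (hdir : DirectedOn (· ≤ ·) C) (hg : IsLUB C g) :
    IsTopologicalBasis
      {W : Set (S.X g) | ∃ (c : C) (O : Set (S.X c)), IsOpen O ∧ S.bond (hg.1 c.2) ⁻¹' O = W} := by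
  have : Nonempty C := hC.to_subtype
  have : IsDirectedOrder C := ⟨directedOn_iff_directed.mp hdir⟩
  convert (S.restrict C).isTopologicalBasis_limitSet.isInducing
    (hS C g hC hdir hg).isInducing using 1
  ext W
  constructor
  · rintro ⟨c, O, hO, rfl⟩
    exact ⟨_, ⟨c, O, hO, rfl⟩, rfl⟩
  · rintro ⟨_, ⟨c, O, hO, rfl⟩, rfl⟩
    exact ⟨c, O, hO, rfl⟩

variable {D : Set S.limitSet}

theorem preimage_bond_sdiff_closure_nonempty_mono {a b c : A} (hab : a ≤ b) (hbc : b ≤ c)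
    (hb : DenseRange (S.proj b)) {O : Set (S.X a)} (hO : IsOpen O)
    (h : (S.bond hab ⁻¹' O \ closure (S.proj b '' D)).Nonempty) :
    (S.bond (hab.trans hbc) ⁻¹' O \ closure (S.proj c '' D)).Nonempty := by
  have hopen : IsOpen (S.bond hab ⁻¹' O \ closure (S.proj b '' D)) :=
    (hO.preimage (S.bond_cont hab)).sdiff isClosed_closure
  obtain ⟨x, hxO, hxD⟩ := (denseRange_bond hbc hb).exists_mem_open hopen h
  have hmaps : MapsTo (S.bond hbc) (S.proj c '' D) (S.proj b '' D) := by
    rintro _ ⟨y, hy, rfl⟩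
    exact ⟨y, hy, (S.bond_proj hbc y).symm⟩
  refine ⟨x, ?_, fun hx => hxD (hmaps.closure (S.bond_cont hbc) hx)⟩
  rwa [mem_preimage, S.bond_comp] at hxO

theorem exists_ge_preimage_bond_sdiff_closure_nonempty [Nonempty A] [IsDirectedOrder A]
    (hD : IsNowhereDense D) {a : A} (ha : DenseRange (S.proj a)) {O : Set (S.X a)}
    (hO : IsOpen O) (hne : O.Nonempty) :
    ∃ (b : A) (hab : a ≤ b), (S.bond hab ⁻¹' O \ closure (S.proj b '' D)).Nonempty := by
  have hnot : ¬ S.proj a ⁻¹' O ⊆ closure D := fun hsub => by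
    obtain ⟨x, hx⟩ := ha.exists_mem_open hO hne
    exact hD.subset (interior_maximal hsub (hO.preimage (S.continuous_proj a)) hx)
  obtain ⟨y, hyO, hyD⟩ := not_subset.mp hnot
  obtain ⟨_, ⟨c, N, hN, rfl⟩, hyN, hND⟩ :=
    S.isTopologicalBasis_limitSet.exists_subset_of_mem_open hyD isClosed_closure.isOpen_compl
  obtain ⟨b, hab, hcb⟩ := exists_ge_ge a c
  refine ⟨b, hab, S.proj b y, ?_, fun hy => ?_⟩
  · rwa [mem_preimage, bond_proj]
  · have hyN' : S.proj b y ∈ S.bond hcb ⁻¹' N := by rwa [mem_preimage, bond_proj]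
    obtain ⟨_, hzN, z, hzD, rfl⟩ := mem_closure_iff.mp hy _ (hN.preimage (S.bond_cont hcb)) hyN'
    rw [mem_preimage, bond_proj] at hzN
    exact hND hzN (subset_closure hzD)

theorem exists_ge_forall_preimage_bond_sdiff_closure_nonempty [Nonempty A] [IsDirectedOrder A]
    (hS : ∀ a, DenseRange (S.proj a)) (hD : IsNowhereDense D) {a : A}
    (ha : CardDirected A (piWeight (S.X a))) :
    ∃ (b : A) (hab : a ≤ b), ∀ O : Set (S.X a), IsOpen O → O.Nonempty →
      (S.bond hab ⁻¹' O \ closure (S.proj b '' D)).Nonempty := by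
  obtain ⟨B, ⟨hBopen, hBdense⟩, hcard⟩ := exists_isPiBase_mk_eq_piWeight (S.X a)
  choose b hab hb using fun V : B => exists_ge_preimage_bond_sdiff_closure_nonempty hD (hS a)
    (hBopen V V.2).1 (hBopen V V.2).2
  obtain ⟨c₀, hc₀⟩ := ha (range b) (Cardinal.mk_range_le.trans hcard.le)
  obtain ⟨c, hac, hc₀c⟩ := exists_ge_ge a c₀
  refine ⟨c, hac, fun O hO hne => ?_⟩
  obtain ⟨V, hV, hVO⟩ := hBdense O hO hne
  have hbc : b ⟨V, hV⟩ ≤ c := (hc₀ _ (mem_range_self _)).trans hc₀c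
  exact (preimage_bond_sdiff_closure_nonempty_mono _ hbc (hS _) (hBopen V hV).1 (hb ⟨V, hV⟩)).mono
    (sdiff_subset_sdiff_left (preimage_mono hVO))

theorem exists_ge_isNowhereDense_proj_image [Nonempty A] [IsDirectedOrder A]
    (hA : ∀ a, CardDirected A (piWeight (S.X a))) (hω : OmegaComplete A)
    (hcont : S.IsContinuousSpectrum) (hS : ∀ a, DenseRange (S.proj a)) (hD : IsNowhereDense D)
    (a : A) : ∃ g, a ≤ g ∧ IsNowhereDense (S.proj g '' D) := by
  choose φ hφ hescape using fun a =>
    exists_ge_forall_preimage_bond_sdiff_closure_nonempty hS hD (hA a)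
  obtain ⟨C, g, haC, hchain, hmaps, hg⟩ := hω.exists_isChain_mapsTo_isLUB hφ a
  refine ⟨g, hg.1 haC, eq_empty_of_forall_notMem fun w hw => ?_⟩
  obtain ⟨_, ⟨c, O, hO, rfl⟩, hwO, hOD⟩ :=
    (hcont.isTopologicalBasis_of_isLUB ⟨a, haC⟩ hchain.directedOn hg).exists_subset_of_mem_open hw
      isOpen_interior
  obtain ⟨x, hxO, hxD⟩ := preimage_bond_sdiff_closure_nonempty_mono (hφ c) (hg.1 (hmaps c.2))
    (hS _) hO (hescape c O hO ⟨_, hwO⟩)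
  exact hxD (interior_subset (hOD hxO))

end InvSpec

theorem SpecMor.image_subset_closure_proj_image_limMap {S T : InvSpec A} (F : SpecMor S T) {a : A}
    (ha : DenseRange (S.proj a)) {W : Set (S.X a)} (hW : IsOpen W) :
    F.maps a '' W ⊆ closure (T.proj a '' (F.limMap '' (S.proj a ⁻¹' W))) :=
  calc F.maps a '' W ⊆ F.maps a '' closure (S.proj a '' (S.proj a ⁻¹' W)) := by
        rw [image_preimage_eq_inter_range]
        exact image_mono (ha.open_subset_closure_inter hW)
    _ ⊆ closure (F.maps a '' (S.proj a '' (S.proj a ⁻¹' W))) :=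
        image_closure_subset_closure_image (F.maps_cont a)
    _ = closure (T.proj a '' (F.limMap '' (S.proj a ⁻¹' W))) := by
        simp only [image_image]
        rfl

theorem skeletal_limMap_of_skeletal_maps_general [Nonempty A] [IsDirectedOrder A]
    (S T : InvSpec A) (F : SpecMor S T) (hA : ∀ a, CardDirected A (piWeight (T.X a)))
    (hω : OmegaComplete A) (hcont : T.IsContinuousSpectrum)
    (hS : ∀ a, DenseRange (S.proj a)) (hT : ∀ a, DenseRange (T.proj a))
    (hsk : ∀ a, Skeletal (F.maps a)) : Skeletal F.limMap := by
  rintro U hU ⟨x, hx⟩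
  by_contra hempty
  have hnd : IsNowhereDense (F.limMap '' U) := not_nonempty_iff_eq_empty.mp hempty
  obtain ⟨_, ⟨a, O, hO, rfl⟩, hxO, hOU⟩ :=
    S.isTopologicalBasis_limitSet.exists_subset_of_mem_open hx hU
  obtain ⟨g, hag, hg⟩ := InvSpec.exists_ge_isNowhereDense_proj_image hA hω hcont hT hnd a
  let W : Set (S.X g) := S.bond hag ⁻¹' O
  have hW : IsOpen W := hO.preimage (S.bond_cont hag)
  have hxW : S.proj g x ∈ W := by rwa [mem_preimage, S.bond_proj]
  have hWU : S.proj g ⁻¹' W ⊆ U := fun y hy => hOU (by rwa [mem_preimage, ← S.bond_proj hag])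
  have hsub : F.maps g '' W ⊆ closure (T.proj g '' (F.limMap '' U)) :=
    (F.image_subset_closure_proj_image_limMap (hS g) hW).trans
      (closure_mono (image_mono (image_mono hWU)))
  exact (hsk g W hW ⟨_, hxW⟩).ne_empty (hg.closure.mono hsub)

/-- If every map `f_a` of a morphism between two πτ-spectra with surjective limit
projections is skeletal, then the limit map `lim f_a` is skeletal. -/
theorem skeletal_limMap_of_skeletal_maps {A : Type u} [PartialOrder A] [Nonempty A]
    (τ : Cardinal.{u}) (hτ : Cardinal.aleph0 ≤ τ) (S T : InvSpec A) (F : SpecMor S T)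
    (hSτ : IsPiTauSpectrum τ S) (hTτ : IsPiTauSpectrum τ T)
    (hS : ∀ a : A, Function.Surjective (S.proj a))
    (hT : ∀ a : A, Function.Surjective (T.proj a))
    (hsk : ∀ a : A, Skeletal (F.maps a)) :
    Skeletal F.limMap := by
  obtain ⟨hw, hA, hω, hcont⟩ := hTτ
  have := hA.isDirectedOrder hτ
  exact skeletal_limMap_of_skeletal_maps_general S T F
    (fun a K hK => hA K (hK.trans (hw a))) hω hcont
    (fun a => (hS a).denseRange) (fun a => (hT a).denseRange) hsk
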